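/- Validity of the LP-dual-based heuristic bound (first part of Proposition 1): for every y ∈ Ω and every pair (λ, μ) with λ : Fin m → ℝ, λ ≥ 0, μ : Fin n → ℝ, μ ≤ 0, and (Aᵀ λ) i + μ i ≤ l i + (u i − l i) * y i for all i, the quantity Σ_i (l i + (u i − l i) * y i) * y i − Σ_k b k * λ k − Σ_i μ i is an upper bound on min_{y'∈Ω} R_{y'}, the optimal robustness cost. -/

import Mathlib

open Finset

/-!
For a binary `y` the regret is largest in the scenario `l + (u - l) * y`, which puts the upper costs
on the elements chosen by `y` and the lower costs on all others: passing from `c` to this scenario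
raises the cost of `y` at least as much as that of any competitor in the unit box. The robustness
cost of `y` is therefore its cost in this scenario minus the optimal value there, and that optimal
value is bounded below by weak duality for the LP relaxation `A x ≥ b`, `0 ≤ x ≤ 1`, where `lam`
and `mu` are the multipliers of `A x ≥ b` and `x ≤ 1`.
-/

section

open Matrix

variable {ι κ R : Type*}

theorem mem_Icc_zero_one_of_forall_eq_zero_or_eq_one
    [Zero R] [One R] [Preorder R] [ZeroLEOneClass R] {x : ι → R} (hx : ∀ i, x i = 0 ∨ x i = 1) :
    x ∈ Set.Icc 0 1 := by
  have hcoord : ∀ i, 0 ≤ x i ∧ x i ≤ 1 := fun i ↦ by rcases hx i with hi | hi <;> simp [hi]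
  exact ⟨fun i ↦ (hcoord i).1, fun i ↦ (hcoord i).2⟩

/-- The worst-case scenario for a binary solution `y`: cost `u i` where `y i = 1` and cost `l i`
where `y i = 0`. The affine formula is the one in the dual constraints; it interpolates between the
two costs when `y i` is fractional. -/
def worstScenario [Ring R] (l u y : ι → R) : ι → R :=
  fun i ↦ l i + (u i - l i) * y i

theorem worstScenario_mem_Icc [Ring R] [PartialOrder R] [IsOrderedRing R] {l u y : ι → R}
    (hlu : l ≤ u) (hy : y ∈ Set.Icc 0 1) : worstScenario l u y ∈ Set.Icc l u :=
  ⟨fun i ↦ le_add_of_nonneg_right (mul_nonneg (sub_nonneg.2 (hlu i)) (hy.1 i)),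
    fun i ↦ le_sub_iff_add_le'.1 (mul_le_of_le_one_right (sub_nonneg.2 (hlu i)) (hy.2 i))⟩

variable [Fintype ι] [Fintype κ]

theorem dotProduct_sub_le_worstScenario_dotProduct_sub
    [Ring R] [PartialOrder R] [IsOrderedRing R] {l u c x y : ι → R}
    (hc : c ∈ Set.Icc l u) (hx : x ∈ Set.Icc 0 1) (hy : ∀ i, y i = 0 ∨ y i = 1) :
    c ⬝ᵥ (y - x) ≤ worstScenario l u y ⬝ᵥ (y - x) := by
  refine sum_le_sum fun i _ ↦ ?_
  rcases hy i with hi | hi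
  · simpa [worstScenario, hi] using mul_le_mul_of_nonneg_right (hc.1 i) (hx.1 i)
  · simpa [worstScenario, hi] using mul_le_mul_of_nonneg_right (hc.2 i) (sub_nonneg.2 (hx.2 i))

theorem dotProduct_add_sum_le_dotProduct_of_dual_feasible
    [CommRing R] [PartialOrder R] [IsOrderedRing R]
    {A : Matrix κ ι R} {b lam : κ → R} {c mu x : ι → R}
    (hlam : 0 ≤ lam) (hmu : mu ≤ 0) (hdual : Aᵀ *ᵥ lam + mu ≤ c)
    (hAx : b ≤ A *ᵥ x) (hx : x ∈ Set.Icc 0 1) :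
    b ⬝ᵥ lam + ∑ i, mu i ≤ c ⬝ᵥ x := by
  have hsum : ∑ i, mu i ≤ mu ⬝ᵥ x :=
    sum_le_sum fun i _ ↦ le_mul_of_le_one_right (hmu i) (hx.2 i)
  calc b ⬝ᵥ lam + ∑ i, mu i
      ≤ (A *ᵥ x) ⬝ᵥ lam + mu ⬝ᵥ x :=
        add_le_add (dotProduct_le_dotProduct_of_nonneg_right hAx hlam) hsum
    _ = (Aᵀ *ᵥ lam + mu) ⬝ᵥ x := by
        rw [add_dotProduct, mulVec_transpose, ← dotProduct_mulVec, dotProduct_comm lam]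
    _ ≤ c ⬝ᵥ x := dotProduct_le_dotProduct_of_nonneg_right hdual hx.1

/-- The optimal value of the nominal problem over `Ω` in scenario `c`. The infimum is meaningful
when `Ω` is nonempty and bounded. -/
noncomputable def optimalCost (Ω : Set (ι → ℝ)) (c : ι → ℝ) : ℝ :=
  sInf ((c ⬝ᵥ ·) '' Ω)

/-- The regret of the solution `y` in scenario `c`, measured against the best solution in `Ω`. -/
noncomputable def regret (Ω : Set (ι → ℝ)) (c y : ι → ℝ) : ℝ :=
  c ⬝ᵥ y - optimalCost Ω c

/-- The robustness cost `R_y`: the maximal regret of `y` over all scenarios between `l` and `u`. -/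
noncomputable def robustnessCost (Ω : Set (ι → ℝ)) (l u y : ι → ℝ) : ℝ :=
  sSup ((regret Ω · y) '' Set.Icc l u)

/-- The value of the minmax regret problem: the least robustness cost of a solution in `Ω`. -/
noncomputable def optimalRobustnessCost (Ω : Set (ι → ℝ)) (l u : ι → ℝ) : ℝ :=
  sInf (robustnessCost Ω l u '' Ω)

variable {Ω : Set (ι → ℝ)} {c l u x y : ι → ℝ}

theorem optimalCost_le_dotProduct (hΩ : Bornology.IsBounded Ω) (hx : x ∈ Ω) :
    optimalCost Ω c ≤ c ⬝ᵥ x := by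
  have hcont : Continuous (c ⬝ᵥ · : (ι → ℝ) → ℝ) := by fun_prop
  have hbdd : BddBelow ((c ⬝ᵥ ·) '' closure Ω) :=
    hΩ.isCompact_closure.bddBelow_image hcont.continuousOn
  exact csInf_le (hbdd.mono (Set.image_mono subset_closure)) (Set.mem_image_of_mem _ hx)

theorem le_optimalCost {a : ℝ} (hΩ : Ω.Nonempty) (h : ∀ x ∈ Ω, a ≤ c ⬝ᵥ x) :
    a ≤ optimalCost Ω c :=
  le_csInf (hΩ.image _) (Set.forall_mem_image.2 h)

theorem regret_nonneg (hΩ : Bornology.IsBounded Ω) (hy : y ∈ Ω) : 0 ≤ regret Ω c y :=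
  sub_nonneg.2 (optimalCost_le_dotProduct hΩ hy)

theorem robustnessCost_nonneg (hΩ : Bornology.IsBounded Ω) (hy : y ∈ Ω) :
    0 ≤ robustnessCost Ω l u y :=
  Real.sSup_nonneg (Set.forall_mem_image.2 fun _ _ ↦ regret_nonneg hΩ hy)

theorem optimalRobustnessCost_le_robustnessCost (hΩ : Bornology.IsBounded Ω) (hy : y ∈ Ω) :
    optimalRobustnessCost Ω l u ≤ robustnessCost Ω l u y :=
  csInf_le ⟨0, Set.forall_mem_image.2 fun _ ↦ robustnessCost_nonneg hΩ⟩
    (Set.mem_image_of_mem _ hy)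

theorem regret_le_regret_worstScenario (hΩ : Ω ⊆ Set.Icc 0 1) (hne : Ω.Nonempty)
    (hc : c ∈ Set.Icc l u) (hy : ∀ i, y i = 0 ∨ y i = 1) :
    regret Ω c y ≤ regret Ω (worstScenario l u y) y := by
  rw [regret, sub_le_comm]
  refine le_optimalCost hne fun x hx ↦ ?_
  have hopt : optimalCost Ω (worstScenario l u y) ≤ worstScenario l u y ⬝ᵥ x :=
    optimalCost_le_dotProduct ((Metric.isBounded_Icc 0 1).subset hΩ) hx
  have hexchange := dotProduct_sub_le_worstScenario_dotProduct_sub hc (hΩ hx) hy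
  rw [dotProduct_sub, dotProduct_sub] at hexchange
  rw [regret]
  linarith

theorem robustnessCost_eq_regret_worstScenario (hlu : l ≤ u) (hΩ : Ω ⊆ Set.Icc 0 1)
    (hyΩ : y ∈ Ω) (hy : ∀ i, y i = 0 ∨ y i = 1) :
    robustnessCost Ω l u y = regret Ω (worstScenario l u y) y :=
  IsGreatest.csSup_eq
    ⟨Set.mem_image_of_mem _ (worstScenario_mem_Icc hlu (hΩ hyΩ)),
      Set.forall_mem_image.2 fun _ hc ↦ regret_le_regret_worstScenario hΩ ⟨y, hyΩ⟩ hc hy⟩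

theorem lp_dual_heuristic_upper_bound_general
    {A : Matrix κ ι ℝ} {b lam : κ → ℝ} {mu : ι → ℝ} (hlu : l ≤ u)
    (hAΩ : ∀ x ∈ Ω, b ≤ A *ᵥ x) (hΩ : Ω ⊆ Set.Icc 0 1)
    (hyΩ : y ∈ Ω) (hy : ∀ i, y i = 0 ∨ y i = 1)
    (hlam : 0 ≤ lam) (hmu : mu ≤ 0) (hdual : Aᵀ *ᵥ lam + mu ≤ worstScenario l u y) :
    optimalRobustnessCost Ω l u ≤ worstScenario l u y ⬝ᵥ y - b ⬝ᵥ lam - ∑ i, mu i := by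
  have hduality : b ⬝ᵥ lam + ∑ i, mu i ≤ optimalCost Ω (worstScenario l u y) :=
    le_optimalCost ⟨y, hyΩ⟩ fun x hx ↦
      dotProduct_add_sum_le_dotProduct_of_dual_feasible hlam hmu hdual (hAΩ x hx) (hΩ hx)
  calc optimalRobustnessCost Ω l u
      ≤ robustnessCost Ω l u y :=
        optimalRobustnessCost_le_robustnessCost ((Metric.isBounded_Icc 0 1).subset hΩ) hyΩ
    _ = worstScenario l u y ⬝ᵥ y - optimalCost Ω (worstScenario l u y) :=
        robustnessCost_eq_regret_worstScenario hlu hΩ hyΩ hy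
    _ ≤ worstScenario l u y ⬝ᵥ y - (b ⬝ᵥ lam + ∑ i, mu i) := sub_le_sub_left hduality _
    _ = worstScenario l u y ⬝ᵥ y - b ⬝ᵥ lam - ∑ i, mu i := (sub_sub _ _ _).symm

end

/-- Validity of the LP-dual-based heuristic bound (first part of Proposition 1):
for every `y ∈ Ω` and every dual-feasible pair `(λ, μ)` (that is, `λ ≥ 0`, `μ ≤ 0` and
`(Aᵀ λ) i + μ i ≤ l i + (u i - l i) * y i` for all `i`), the quantity
`∑ i, (l i + (u i - l i) * y i) * y i - ∑ k, b k * λ k - ∑ i, μ i` is an upper bound on the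
optimal robustness cost `min_{y' ∈ Ω} R_{y'}`. -/
theorem lp_dual_heuristic_upper_bound
    (m n : ℕ) (hm : 0 < m) (hn : 0 < n)
    (A : Matrix (Fin m) (Fin n) ℝ) (b : Fin m → ℝ)
    (l u : Fin n → ℝ) (hl : ∀ i, 0 ≤ l i) (hlu : ∀ i, l i ≤ u i)
    (Ω : Set (Fin n → ℝ))
    (hΩdef : Ω = {y : Fin n → ℝ | (∀ k, b k ≤ A.mulVec y k) ∧ ∀ i, y i = 0 ∨ y i = 1})
    (hΩne : Ω.Nonempty)
    (y : Fin n → ℝ) (hy : y ∈ Ω)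
    (lam : Fin m → ℝ) (hlam : ∀ k, 0 ≤ lam k)
    (mu : Fin n → ℝ) (hmu : ∀ i, mu i ≤ 0)
    (hdual : ∀ i, A.transpose.mulVec lam i + mu i ≤ l i + (u i - l i) * y i) :
    sInf {r : ℝ | ∃ y' ∈ Ω,
        r = sSup {t : ℝ | ∃ c : Fin n → ℝ, (∀ i, l i ≤ c i ∧ c i ≤ u i) ∧
          t = (∑ i, c i * y' i) - sInf {v : ℝ | ∃ x ∈ Ω, v = ∑ i, c i * x i}}} ≤
      (∑ i, (l i + (u i - l i) * y i) * y i) - (∑ k, b k * lam k) - (∑ i, mu i) := by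
  subst hΩdef
  simpa only [optimalRobustnessCost, robustnessCost, regret, optimalCost, worstScenario, dotProduct,
    Set.image, Set.mem_Icc, Pi.le_def, ← forall_and, eq_comm] using
    lp_dual_heuristic_upper_bound_general hlu (fun x hx ↦ hx.1)
      (fun x hx ↦ mem_Icc_zero_one_of_forall_eq_zero_or_eq_one hx.2) hy hy.2 hlam hmu hdual
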